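/- Let R be a commutative ring such that every flat R-module has cotorsion dimension at most n. Then every flat R[x]-module has cotorsion dimension at most n+1. -/

import Mathlib

open CategoryTheory

universe u

section Defs

variable (R : Type u) [CommRing R]

/-- A linear map is a pure monomorphism if it is injective and stays injective
after tensoring with any module. -/
def IsPureMono {A B : Type u} [AddCommGroup A] [Module R A] [AddCommGroup B] [Module R B]
    (f : A →ₗ[R] B) : Prop :=
  Function.Injective f ∧
    ∀ (P : Type u) [AddCommGroup P] [Module R P],
      Function.Injective (LinearMap.rTensor P f)

/-- A module is pure injective if it is injective with respect to pure monomorphisms. -/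
def IsPureInjective (E : Type u) [AddCommGroup E] [Module R E] : Prop :=
  ∀ ⦃A B : Type u⦄ [AddCommGroup A] [Module R A] [AddCommGroup B] [Module R B]
    (f : A →ₗ[R] B), IsPureMono R f →
      ∀ g : A →ₗ[R] E, ∃ h : B →ₗ[R] E, h.comp f = g

/-- Vanishing of `Ext^n`. -/
def extVanish (n : ℕ) (M N : Type u) [AddCommGroup M] [Module R M]
    [AddCommGroup N] [Module R N] : Prop :=
  Subsingleton (((Ext R (ModuleCat.{u} R) n).obj
    (Opposite.op (ModuleCat.of R M))).obj (ModuleCat.of R N))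

/-- A module `C` is cotorsion if `Ext¹(F, C) = 0` for every flat module `F`. -/
def IsCotorsion (C : Type u) [AddCommGroup C] [Module R C] : Prop :=
  ∀ (F : Type u) [AddCommGroup F] [Module R F], Module.Flat R F →
    extVanish R 1 F C

/-- Short exact sequence of modules. -/
def IsShortExact {A B C : Type u} [AddCommGroup A] [Module R A] [AddCommGroup B] [Module R B]
    [AddCommGroup C] [Module R C] (f : A →ₗ[R] B) (g : B →ₗ[R] C) : Prop :=
  Function.Injective f ∧ Function.Surjective g ∧ LinearMap.ker g = LinearMap.range f

/-- Pure short exact sequence. -/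
def IsPureShortExact {A B C : Type u} [AddCommGroup A] [Module R A] [AddCommGroup B]
    [Module R B] [AddCommGroup C] [Module R C] (f : A →ₗ[R] B) (g : B →ₗ[R] C) : Prop :=
  IsShortExact R f g ∧
    ∀ (P : Type u) [AddCommGroup P] [Module R P],
      Function.Injective (LinearMap.rTensor P f)

/-- A cotorsion resolution `0 → M → C⁰ → ⋯ → Cⁿ → 0` of length `n`. -/
structure CotorsionResolution (M : Type u) [AddCommGroup M] [Module R M] (n : ℕ) where
  C : ℕ → Type u
  [acg : ∀ i, AddCommGroup (C i)]
  [mod : ∀ i, Module R (C i)]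
  f : M →ₗ[R] C 0
  d : ∀ i, C i →ₗ[R] C (i + 1)
  hf : Function.Injective f
  hd0 : LinearMap.ker (d 0) = LinearMap.range f
  hd : ∀ i, LinearMap.ker (d (i + 1)) = LinearMap.range (d i)
  hcot : ∀ i, IsCotorsion R (C i)
  htail : ∀ i, n < i → Subsingleton (C i)

/-- `M` has cotorsion dimension at most `n`. -/
def cotorsionDimLE (M : Type u) [AddCommGroup M] [Module R M] (n : ℕ) : Prop :=
  Nonempty (CotorsionResolution R M n)

/-- A pure injective resolution `0 → M → E⁰ → ⋯ → Eⁿ → 0` of length `n`,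
pure exact in each degree. -/
structure PureInjectiveResolution (M : Type u) [AddCommGroup M] [Module R M] (n : ℕ) where
  E : ℕ → Type u
  [acg : ∀ i, AddCommGroup (E i)]
  [mod : ∀ i, Module R (E i)]
  f : M →ₗ[R] E 0
  d : ∀ i, E i →ₗ[R] E (i + 1)
  hf : Function.Injective f
  hd0 : LinearMap.ker (d 0) = LinearMap.range f
  hd : ∀ i, LinearMap.ker (d (i + 1)) = LinearMap.range (d i)
  hpinj : ∀ i, IsPureInjective R (E i)
  htail : ∀ i, n < i → Subsingleton (E i)
  pure : ∀ (P : Type u) [AddCommGroup P] [Module R P],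
    Function.Injective (LinearMap.rTensor P f) ∧
    LinearMap.ker (LinearMap.rTensor P (d 0)) = LinearMap.range (LinearMap.rTensor P f) ∧
    ∀ i, LinearMap.ker (LinearMap.rTensor P (d (i + 1))) =
      LinearMap.range (LinearMap.rTensor P (d i))

/-- `M` has pure injective dimension at most `n`. -/
def pureInjDimLE (M : Type u) [AddCommGroup M] [Module R M] (n : ℕ) : Prop :=
  Nonempty (PureInjectiveResolution R M n)

end Defs

/-!
`cd M ≤ n` if and only if `Ext^(n+1)(F, M) = 0` for every flat `F`. Suppose every flat `R`-module
has `cd ≤ n`, and let `0 → K → P → Z → 0` be exact with `P` projective and `Z` the `n`-th syzygy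
of a flat module `F`. Since `K` is flat, `Ext^1(Z, K) = Ext^(n+1)(F, K) = 0`, so the sequence
splits and `pd F ≤ n`. A flat `R[X]`-module `F` is flat over `R`, and the exact sequence
`0 → R[X] ⊗ F → R[X] ⊗ F → F → 0` bounds its projective dimension over `R[X]` by `n + 1`, so
`Ext^(n+2)(F, G) = 0` for every `R[X]`-module `G`.
-/

section ExtVanishing

variable {C : Type*} [Category* C] [Abelian C] [HasExt C] {S : ShortComplex C}

theorem subsingleton_ext_X₁_of_covariant (hS : S.ShortExact) (X : C) (n : ℕ)
    [Subsingleton (Abelian.Ext X S.X₃ n)] [Subsingleton (Abelian.Ext X S.X₂ (n + 1))] :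
    Subsingleton (Abelian.Ext X S.X₁ (n + 1)) := by
  refine subsingleton_of_forall_eq 0 fun x => ?_
  obtain ⟨y, rfl⟩ := Abelian.Ext.covariant_sequence_exact₁ X hS x (Subsingleton.elim _ _) rfl
  rw [Subsingleton.elim y 0, Abelian.Ext.zero_comp]

theorem subsingleton_ext_X₃_of_covariant (hS : S.ShortExact) (X : C) (n : ℕ)
    [Subsingleton (Abelian.Ext X S.X₂ n)] [Subsingleton (Abelian.Ext X S.X₁ (n + 1))] :
    Subsingleton (Abelian.Ext X S.X₃ n) := by
  refine subsingleton_of_forall_eq 0 fun x => ?_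
  obtain ⟨y, rfl⟩ := Abelian.Ext.covariant_sequence_exact₃ X hS x rfl (Subsingleton.elim _ _)
  rw [Subsingleton.elim y 0, Abelian.Ext.zero_comp]

theorem subsingleton_ext_X₁_of_contravariant (hS : S.ShortExact) (Y : C) (n : ℕ)
    [Subsingleton (Abelian.Ext S.X₂ Y n)] [Subsingleton (Abelian.Ext S.X₃ Y (n + 1))] :
    Subsingleton (Abelian.Ext S.X₁ Y n) := by
  refine subsingleton_of_forall_eq 0 fun x => ?_
  obtain ⟨y, rfl⟩ :=
    Abelian.Ext.contravariant_sequence_exact₁ hS Y x (add_comm 1 n) (Subsingleton.elim _ _)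
  rw [Subsingleton.elim y 0, Abelian.Ext.comp_zero]

theorem subsingleton_ext_X₃_of_contravariant (hS : S.ShortExact) (Y : C) (n : ℕ)
    [Subsingleton (Abelian.Ext S.X₁ Y n)] [Subsingleton (Abelian.Ext S.X₂ Y (n + 1))] :
    Subsingleton (Abelian.Ext S.X₃ Y (n + 1)) := by
  refine subsingleton_of_forall_eq 0 fun x => ?_
  obtain ⟨y, rfl⟩ :=
    Abelian.Ext.contravariant_sequence_exact₃ hS Y x (Subsingleton.elim _ _) (add_comm 1 n)
  rw [Subsingleton.elim y 0, Abelian.Ext.comp_zero]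

theorem projective_X₃_of_subsingleton_ext_one (hS : S.ShortExact) [Projective S.X₂]
    [Subsingleton (Abelian.Ext S.X₃ S.X₁ 1)] : Projective S.X₃ := by
  obtain ⟨x, hx⟩ := Abelian.Ext.covariant_sequence_exact₃ S.X₃ hS (Abelian.Ext.mk₀ (𝟙 S.X₃))
    (zero_add 1) (Subsingleton.elim _ _)
  obtain ⟨s, rfl⟩ := (Abelian.Ext.mk₀_bijective _ _).2 x
  rw [Abelian.Ext.mk₀_comp_mk₀, (Abelian.Ext.mk₀_bijective _ _).1.eq_iff] at hx
  exact (Retract.mk s S.g hx).projective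

end ExtVanishing

section Modules

variable {R : Type u} [CommRing R]

theorem extVanish_succ_iff_subsingleton_ext (n : ℕ) (M N : Type u) [AddCommGroup M] [Module R M]
    [AddCommGroup N] [Module R N] :
    extVanish R (n + 1) M N ↔
      Subsingleton (Abelian.Ext (ModuleCat.of R M) (ModuleCat.of R N) (n + 1)) := by
  let P := projectiveResolution (ModuleCat.of R M)
  have extVanish_iff : extVanish R (n + 1) M N ↔
      ∀ f : P.complex.X (n + 1) ⟶ ModuleCat.of R N, P.complex.d (n + 2) (n + 1) ≫ f = 0 →
        ∃ g : P.complex.X n ⟶ ModuleCat.of R N, P.complex.d (n + 1) n ≫ g = f := by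
    rw [extVanish, ← ModuleCat.isZero_iff_subsingleton,
      (P.isoExt (R := R) (n + 1) (ModuleCat.of R N)).isZero_iff,
      ← HomologicalComplex.exactAt_iff_isZero_homology,
      HomologicalComplex.exactAt_iff' _ n (n + 1) (n + 2) (by simp) (by simp),
      ShortComplex.moduleCat_exact_iff]
    rfl
  rw [extVanish_iff]
  refine ⟨fun h => subsingleton_of_forall_eq 0 fun x => ?_, fun _ f hf => ?_⟩
  · obtain ⟨f, hf, rfl⟩ := P.extMk_surjective x (n + 2) rfl
    exact (P.extMk_eq_zero_iff f (n + 2) rfl hf n rfl).2 (h f hf)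
  · exact (P.extMk_eq_zero_iff f (n + 2) rfl hf n rfl).1 (Subsingleton.elim _ _)

section

variable {A B C : Type u} [AddCommGroup A] [Module R A] [AddCommGroup B] [Module R B]
  [AddCommGroup C] [Module R C] {f : A →ₗ[R] B} {g : B →ₗ[R] C}

theorem IsShortExact.exact (h : IsShortExact R f g) : Function.Exact f g :=
  LinearMap.exact_iff.2 h.2.2

theorem IsShortExact.shortExact (h : IsShortExact R f g) :
    (ModuleCat.shortComplexOfCompEqZero f g h.exact.linearMap_comp_eq_zero).ShortExact :=
  ModuleCat.shortComplex_shortExact _ h.exact h.1 h.2.1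

end

theorem isShortExact_of_shortExact {S : ShortComplex (ModuleCat.{u} R)} (hS : S.ShortExact) :
    IsShortExact R S.f.hom S.g.hom :=
  ⟨hS.moduleCat_injective_f, hS.moduleCat_surjective_g, LinearMap.exact_iff.1
    ((ShortComplex.ShortExact.moduleCat_exact_iff_function_exact _).1 hS.exact)⟩

theorem flat_of_exact_of_flat {K P F : Type*} [AddCommGroup K] [Module R K] [AddCommGroup P]
    [Module R P] [AddCommGroup F] [Module R F] [Module.Flat R P] [Module.Flat R F]
    {f : K →ₗ[R] P} {g : P →ₗ[R] F} (hf : Function.Injective f) (hfg : Function.Exact f g)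
    (hg : Function.Surjective g) : Module.Flat R K := by
  rw [Module.Flat.iff_rTensor_preserves_injective_linearMap]
  intro N N' _ _ _ _ j hj
  have lTensor_f_inj : Function.Injective (f.lTensor N) :=
    LinearMap.lTensor_injective_of_exact_of_flat g hg f hf hfg N
  have rTensor_P_inj : Function.Injective (j.rTensor P) :=
    Module.Flat.rTensor_preserves_injective_linearMap j hj
  have comm : f.lTensor N' ∘ₗ j.rTensor K = j.rTensor P ∘ₗ f.lTensor N := by
    rw [LinearMap.lTensor_comp_rTensor, LinearMap.rTensor_comp_lTensor]
  refine Function.Injective.of_comp (f := f.lTensor N') ?_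
  rw [← LinearMap.coe_comp, comm]
  exact rTensor_P_inj.comp lTensor_f_inj

theorem flat_projectiveShortComplex_X₁ (M : ModuleCat.{u} R) [Module.Flat R M] :
    Module.Flat R M.projectiveShortComplex.X₁ :=
  have h := isShortExact_of_shortExact M.shortExact_projectiveShortComplex
  flat_of_exact_of_flat h.1 h.exact h.2.1

section Cotorsion

variable {M N : Type u} [AddCommGroup M] [Module R M] [AddCommGroup N] [Module R N]

theorem isCotorsion_iff_subsingleton_ext_one :
    IsCotorsion R M ↔ ∀ (F : Type u) [AddCommGroup F] [Module R F], Module.Flat R F →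
      Subsingleton (Abelian.Ext (ModuleCat.of R F) (ModuleCat.of R M) 1) := by
  simp only [IsCotorsion, extVanish_succ_iff_subsingleton_ext 0, zero_add]

theorem IsCotorsion.of_injective [Injective (ModuleCat.of R M)] : IsCotorsion R M :=
  isCotorsion_iff_subsingleton_ext_one.2 fun _ _ _ _ =>
    Abelian.Ext.subsingleton_of_injective _ _ 0

theorem IsCotorsion.of_subsingleton [Subsingleton M] : IsCotorsion R M :=
  have := (ModuleCat.isZero_of_subsingleton (ModuleCat.of R M)).injective
  .of_injective

theorem IsCotorsion.of_linearEquiv (hM : IsCotorsion R M) (e : M ≃ₗ[R] N) : IsCotorsion R N := by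
  rw [isCotorsion_iff_subsingleton_ext_one] at hM ⊢
  intro F _ _ hF
  exact (((Abelian.extFunctorObj (ModuleCat.of R F) 1).mapIso
    e.toModuleIso).addCommGroupIsoToAddEquiv.toEquiv.subsingleton_congr).1 (hM F hF)

theorem IsCotorsion.subsingleton_ext_succ (hM : IsCotorsion R M) (n : ℕ)
    (F : ModuleCat.{u} R) [Module.Flat R F] :
    Subsingleton (Abelian.Ext F (ModuleCat.of R M) (n + 1)) := by
  induction n generalizing F with
  | zero => exact isCotorsion_iff_subsingleton_ext_one.1 hM F ‹_›
  | succ n ih =>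
    have := flat_projectiveShortComplex_X₁ F
    have := ih F.projectiveShortComplex.X₁
    have := Abelian.Ext.subsingleton_of_projective F.projectiveShortComplex.X₂
      (ModuleCat.of R M) (n + 1)
    exact subsingleton_ext_X₃_of_contravariant F.shortExact_projectiveShortComplex _ _

/-- A cotorsion module, as a cotorsion resolution of itself of length `0`. -/
def CotorsionResolution.self (hM : IsCotorsion R M) : CotorsionResolution R M 0 where
  C
    | 0 => M
    | _ + 1 => PUnit
  acg
    | 0 => inferInstanceAs (AddCommGroup M)
    | _ + 1 => inferInstanceAs (AddCommGroup PUnit)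
  mod
    | 0 => inferInstanceAs (Module R M)
    | _ + 1 => PUnit.module
  f := LinearMap.id
  d _ := 0
  hf := Function.injective_id
  hd0 := LinearMap.ker_zero.trans LinearMap.range_id.symm
  hd _ := Subsingleton.elim (α := Submodule R PUnit.{u + 1}) _ _
  hcot
    | 0 => hM
    | _ + 1 => .of_subsingleton (M := PUnit)
  htail
    | 0, h => absurd h (lt_irrefl 0)
    | _ + 1, _ => inferInstanceAs (Subsingleton PUnit)

/-- The resolution `0 → M → C → C⁰ → ⋯ → Cⁿ → 0` spliced from a short exact sequence
`0 → M → C → Q → 0` and a resolution of `Q`. -/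
def CotorsionResolution.cons {C Q : Type u} [AddCommGroup C] [Module R C] [AddCommGroup Q]
    [Module R Q] {f : M →ₗ[R] C} {g : C →ₗ[R] Q} {n : ℕ} (h : IsShortExact R f g)
    (hC : IsCotorsion R C) (r : CotorsionResolution R Q n) : CotorsionResolution R M (n + 1) where
  C
    | 0 => C
    | i + 1 => r.C i
  acg
    | 0 => inferInstanceAs (AddCommGroup C)
    | i + 1 => r.acg i
  mod
    | 0 => inferInstanceAs (Module R C)
    | i + 1 => r.mod i
  f := f
  d
    | 0 => letI := r.acg; letI := r.mod; r.f ∘ₗ g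
    | i + 1 => r.d i
  hf := h.1
  hd0 := by
    let _ := r.acg 0
    let _ := r.mod 0
    exact (LinearMap.ker_comp_of_ker_eq_bot g (LinearMap.ker_eq_bot.2 r.hf)).trans h.2.2
  hd
    | 0 => by
      let _ := r.acg
      let _ := r.mod
      have range_g := LinearMap.range_eq_top.2 h.2.1
      exact r.hd0.trans (LinearMap.range_comp_of_range_eq_top r.f range_g).symm
    | i + 1 => r.hd i
  hcot
    | 0 => hC
    | i + 1 => r.hcot i
  htail
    | i + 1, hi => r.htail i (Nat.lt_of_succ_lt_succ hi)

attribute [local instance] CotorsionResolution.acg CotorsionResolution.mod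

/-- The resolution `0 → im d⁰ → C¹ → ⋯ → Cⁿ⁺¹ → 0` of the first cosyzygy. -/
def CotorsionResolution.tail {n : ℕ} (r : CotorsionResolution R M (n + 1)) :
    CotorsionResolution R (LinearMap.range (r.d 0)) n where
  C i := r.C (i + 1)
  f := (LinearMap.range (r.d 0)).subtype
  d i := r.d (i + 1)
  hf := Submodule.injective_subtype _
  hd0 := (r.hd 0).trans (Submodule.range_subtype _).symm
  hd i := r.hd (i + 1)
  hcot i := r.hcot (i + 1)
  htail i hi := r.htail (i + 1) (Nat.succ_lt_succ hi)

theorem cotorsionDimLE_zero_iff : cotorsionDimLE R M 0 ↔ IsCotorsion R M := by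
  refine ⟨fun ⟨r⟩ => ?_, fun hM => ⟨.self hM⟩⟩
  have : Subsingleton (r.C 1) := r.htail 1 one_pos
  have d_eq_zero : r.d 0 = 0 := Subsingleton.elim _ _
  have f_surj : Function.Surjective r.f := by
    rw [← LinearMap.range_eq_top, ← r.hd0, d_eq_zero, LinearMap.ker_zero]
  exact (r.hcot 0).of_linearEquiv (LinearEquiv.ofBijective r.f ⟨r.hf, f_surj⟩).symm

theorem cotorsionDimLE_succ_iff {n : ℕ} :
    cotorsionDimLE R M (n + 1) ↔
      ∃ (C Q : ModuleCat.{u} R) (f : M →ₗ[R] C) (g : C →ₗ[R] Q),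
        IsShortExact R f g ∧ IsCotorsion R C ∧ cotorsionDimLE R Q n := by
  refine ⟨fun ⟨r⟩ => ?_, fun ⟨C, Q, f, g, hfg, hC, ⟨r⟩⟩ => ⟨.cons hfg hC r⟩⟩
  exact ⟨.of R (r.C 0), .of R (LinearMap.range (r.d 0)), r.f, (r.d 0).rangeRestrict,
    ⟨r.hf, (r.d 0).surjective_rangeRestrict, by rw [LinearMap.ker_rangeRestrict, r.hd0]⟩,
    r.hcot 0, ⟨r.tail⟩⟩

theorem cotorsionDimLE.subsingleton_ext {n : ℕ} (hM : cotorsionDimLE R M n)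
    (F : ModuleCat.{u} R) [Module.Flat R F] :
    Subsingleton (Abelian.Ext F (ModuleCat.of R M) (n + 1)) := by
  induction n generalizing M with
  | zero => exact (cotorsionDimLE_zero_iff.1 hM).subsingleton_ext_succ 0 F
  | succ n ih =>
    obtain ⟨C, Q, f, g, hfg, hC, hQ⟩ := cotorsionDimLE_succ_iff.1 hM
    have := ih hQ
    have := hC.subsingleton_ext_succ (n + 1) F
    exact subsingleton_ext_X₁_of_covariant hfg.shortExact F (n + 1)

theorem exists_isShortExact_injective (M : Type u) [AddCommGroup M] [Module R M] :
    ∃ (I Q : ModuleCat.{u} R) (f : M →ₗ[R] I) (g : I →ₗ[R] Q),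
      IsShortExact R f g ∧ Injective I := by
  obtain ⟨I, hI, ι, hι⟩ := EnoughInjectives.presentation (ModuleCat.of R M)
  exact ⟨I, .of R (I ⧸ LinearMap.range ι.hom), ι.hom, Submodule.mkQ _,
    ⟨(ModuleCat.mono_iff_injective ι).1 hι, Submodule.mkQ_surjective _, Submodule.ker_mkQ _⟩, hI⟩

theorem cotorsionDimLE_of_subsingleton_ext {n : ℕ}
    (hM : ∀ (F : Type u) [AddCommGroup F] [Module R F], Module.Flat R F →
      Subsingleton (Abelian.Ext (ModuleCat.of R F) (ModuleCat.of R M) (n + 1))) :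
    cotorsionDimLE R M n := by
  induction n generalizing M with
  | zero => exact cotorsionDimLE_zero_iff.2 (isCotorsion_iff_subsingleton_ext_one.2 hM)
  | succ n ih =>
    obtain ⟨I, Q, f, g, hfg, hI⟩ := exists_isShortExact_injective (R := R) M
    refine cotorsionDimLE_succ_iff.2 ⟨I, Q, f, g, hfg, .of_injective, ih fun F _ _ hF => ?_⟩
    have := hM F hF
    have := Abelian.Ext.subsingleton_of_injective (ModuleCat.of R F) I n
    exact subsingleton_ext_X₃_of_covariant hfg.shortExact (ModuleCat.of R F) (n + 1)

end Cotorsion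

theorem hasProjectiveDimensionLE_of_subsingleton_ext_flat (n : ℕ) (F : ModuleCat.{u} R)
    [Module.Flat R F] (hF : ∀ (K : ModuleCat.{u} R), Module.Flat R K →
      Subsingleton (Abelian.Ext F K (n + 1))) :
    HasProjectiveDimensionLE F n := by
  have hS := F.shortExact_projectiveShortComplex
  have hK := flat_projectiveShortComplex_X₁ F
  induction n generalizing F with
  | zero =>
    have := hF _ hK
    exact (projective_iff_hasProjectiveDimensionLE_zero _).1
      (projective_X₃_of_subsingleton_ext_one hS)
  | succ n ih =>
    refine (hS.hasProjectiveDimensionLT_X₃_iff n inferInstance).2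
      (ih _ (fun N hN => ?_) (ModuleCat.shortExact_projectiveShortComplex _)
        (flat_projectiveShortComplex_X₁ _))
    have := hF N hN
    have := Abelian.Ext.subsingleton_of_projective F.projectiveShortComplex.X₂ N n
    exact subsingleton_ext_X₁_of_contravariant hS N (n + 1)

end Modules

section BaseChange

open TensorProduct

variable {R A : Type u} [CommRing R] [CommRing A] [Algebra R A] [Module.Flat R A]

theorem IsShortExact.baseChange {L M N : Type u} [AddCommGroup L] [Module R L] [AddCommGroup M]
    [Module R M] [AddCommGroup N] [Module R N] {f : L →ₗ[R] M} {g : M →ₗ[R] N}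
    (h : IsShortExact R f g) : IsShortExact A (f.baseChange A) (g.baseChange A) :=
  ⟨Module.Flat.lTensor_preserves_injective_linearMap f h.1, LinearMap.lTensor_surjective A h.2.1,
    LinearMap.exact_iff.1 (lTensor_exact A h.exact h.2.1 :
      Function.Exact (f.baseChange A) (g.baseChange A))⟩

theorem hasProjectiveDimensionLE_baseChange (n : ℕ) (M : ModuleCat.{u} R)
    [hM : HasProjectiveDimensionLE M n] :
    HasProjectiveDimensionLE (ModuleCat.of A (A ⊗[R] M)) n := by
  induction n generalizing M with
  | zero =>
    rw [← projective_iff_hasProjectiveDimensionLE_zero, ← IsProjective.iff_projective] at hM ⊢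
    infer_instance
  | succ n ih =>
    have hS := M.shortExact_projectiveShortComplex
    let T := M.projectiveShortComplex
    have h : IsShortExact R T.f.hom T.g.hom := isShortExact_of_shortExact hS
    have := (hS.hasProjectiveDimensionLT_X₃_iff n inferInstance).1 hM
    refine (h.baseChange (A := A).shortExact.hasProjectiveDimensionLT_X₃_iff n ?_).2 (ih T.X₁)
    rw [← IsProjective.iff_projective]
    infer_instance

end BaseChange

section CharacteristicSequence

open Polynomial TensorProduct

theorem polynomialTensor_hom_ext {R G N : Type*} [CommSemiring R] [AddCommMonoid G]
    [Module R G] [AddCommMonoid N] [Module R N] {a b : R[X] ⊗[R] G →ₗ[R] N}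
    (h : ∀ (i : ℕ) (g : G), a ((X ^ i : R[X]) ⊗ₜ g) = b ((X ^ i : R[X]) ⊗ₜ g)) : a = b := by
  ext i g
  simpa [X_pow_eq_monomial] using h i g

variable (R G : Type*) [CommRing R] [AddCommGroup G] [Module R G] [Module R[X] G]
  [IsScalarTower R R[X] G]

/-- The map `X ⊗ 1 - 1 ⊗ X` on `R[X] ⊗ G`, first map of the characteristic sequence
`0 → R[X] ⊗ G → R[X] ⊗ G → G → 0` of an `R[X]`-module `G`. -/
noncomputable def characteristicMap : R[X] ⊗[R] G →ₗ[R[X]] R[X] ⊗[R] G :=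
  LinearMap.lsmul R[X] _ X - (Algebra.lsmul R R G (X : R[X])).baseChange R[X]

/-- The action `p ⊗ g ↦ p • g`, second map of the characteristic sequence. -/
noncomputable def polynomialAction : R[X] ⊗[R] G →ₗ[R[X]] G :=
  LinearMap.id.liftBaseChange R[X]

/-- The map `g ↦ ∑_{j < i} X ^ j ⊗ X ^ (i - 1 - j) • g`, that is, the divided difference
`((X ⊗ 1) ^ i - (1 ⊗ X) ^ i) / (X ⊗ 1 - 1 ⊗ X)` applied to `1 ⊗ g`. The recursion on `i` avoids
truncated subtraction in the exponents. -/
noncomputable def powDividedDifference : ℕ → G →ₗ[R] R[X] ⊗[R] G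
  | 0 => 0
  | i + 1 => TensorProduct.mk R R[X] G (X ^ i) +
      powDividedDifference i ∘ₗ Algebra.lsmul R R G (X : R[X])

/-- The contracting homotopy `X ^ i ⊗ g ↦ ∑_{j < i} X ^ j ⊗ X ^ (i - 1 - j) • g` of the
characteristic sequence, which is linear over `R` but not over `R[X]`. -/
noncomputable def characteristicHomotopy : R[X] ⊗[R] G →ₗ[R] R[X] ⊗[R] G :=
  TensorProduct.lift ((basisMonomials R).constr R (powDividedDifference R G))

variable {R G}

theorem polynomialAction_tmul (p : R[X]) (g : G) : polynomialAction R G (p ⊗ₜ g) = p • g := rfl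

theorem characteristicMap_X_pow_tmul (i : ℕ) (g : G) :
    characteristicMap R G ((X ^ i : R[X]) ⊗ₜ g) =
      (X ^ (i + 1) : R[X]) ⊗ₜ g - (X ^ i : R[X]) ⊗ₜ ((X : R[X]) • g) := by
  simp [characteristicMap, TensorProduct.smul_tmul', pow_succ']

theorem characteristicHomotopy_X_pow_tmul (i : ℕ) (g : G) :
    characteristicHomotopy R G ((X ^ i : R[X]) ⊗ₜ g) = powDividedDifference R G i g := by
  have X_pow_eq : (X ^ i : R[X]) = basisMonomials R i := by
    rw [coe_basisMonomials, X_pow_eq_monomial]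
  rw [characteristicHomotopy, TensorProduct.lift.tmul, X_pow_eq, Module.Basis.constr_basis]

theorem polynomialAction_comp_characteristicMap :
    polynomialAction R G ∘ₗ characteristicMap R G = 0 := by
  ext g
  simp [characteristicMap, polynomialAction]

theorem characteristicHomotopy_comp_characteristicMap :
    characteristicHomotopy R G ∘ₗ (characteristicMap R G).restrictScalars R = LinearMap.id :=
  polynomialTensor_hom_ext fun i g => by
    simp [characteristicMap_X_pow_tmul, characteristicHomotopy_X_pow_tmul, powDividedDifference]

theorem characteristicMap_powDividedDifference (i : ℕ) (g : G) :
    characteristicMap R G (powDividedDifference R G i g) =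
      (X ^ i : R[X]) ⊗ₜ g - 1 ⊗ₜ ((X ^ i : R[X]) • g) := by
  induction i generalizing g with
  | zero => simp [powDividedDifference]
  | succ i ih =>
    simp [powDividedDifference, ih, characteristicMap_X_pow_tmul, smul_smul, pow_succ]

theorem characteristicMap_characteristicHomotopy (p : R[X] ⊗[R] G) :
    characteristicMap R G (characteristicHomotopy R G p) = p - 1 ⊗ₜ polynomialAction R G p := by
  have h : (characteristicMap R G).restrictScalars R ∘ₗ characteristicHomotopy R G =
      LinearMap.id - TensorProduct.mk R R[X] G 1 ∘ₗ (polynomialAction R G).restrictScalars R :=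
    polynomialTensor_hom_ext fun i g => by
      simp [characteristicHomotopy_X_pow_tmul, characteristicMap_powDividedDifference,
        polynomialAction_tmul]
  exact LinearMap.congr_fun h p

end CharacteristicSequence

section PolynomialDimension

open Polynomial TensorProduct

variable {R G : Type u} [CommRing R] [AddCommGroup G] [Module R G] [Module R[X] G]
  [IsScalarTower R R[X] G]

theorem isShortExact_characteristicMap_polynomialAction :
    IsShortExact R[X] (characteristicMap R G) (polynomialAction R G) := by
  refine ⟨?_, fun g => ⟨1 ⊗ₜ g, by rw [polynomialAction_tmul, one_smul]⟩, le_antisymm ?_ ?_⟩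
  · exact Function.LeftInverse.injective
      (LinearMap.congr_fun characteristicHomotopy_comp_characteristicMap)
  · intro p hp
    refine ⟨characteristicHomotopy R G p, ?_⟩
    rw [characteristicMap_characteristicHomotopy, LinearMap.mem_ker.1 hp, tmul_zero, sub_zero]
  · exact LinearMap.range_le_ker_iff.2 polynomialAction_comp_characteristicMap

theorem hasProjectiveDimensionLE_polynomial_succ (n : ℕ)
    [HasProjectiveDimensionLE (ModuleCat.of R G) n] :
    HasProjectiveDimensionLE (ModuleCat.of R[X] G) (n + 1) := by
  have : HasProjectiveDimensionLE (ModuleCat.of R[X] (R[X] ⊗[R] G)) n :=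
    hasProjectiveDimensionLE_baseChange n (ModuleCat.of R G)
  exact isShortExact_characteristicMap_polynomialAction.shortExact.hasProjectiveDimensionLT_X₃
    (n + 1) this (hasProjectiveDimensionLT_of_ge _ (n + 1) (n + 2) (Nat.le_succ _))

end PolynomialDimension

theorem polynomial_flat_cotorsionDim_le_succ_general (R : Type u) [CommRing R] (n : ℕ)
    (hcd : ∀ (F : Type u) [AddCommGroup F] [Module R F], Module.Flat R F →
      cotorsionDimLE R F n)
    (G : Type u) [AddCommGroup G] [Module (Polynomial R) G] :
    cotorsionDimLE (Polynomial R) G (n + 1) := by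
  refine cotorsionDimLE_of_subsingleton_ext fun F _ _ hF => ?_
  let _ : Module R F := Module.compHom F (algebraMap R (Polynomial R))
  have : IsScalarTower R (Polynomial R) F := .of_algebraMap_smul fun _ _ => rfl
  have : Module.Flat R F := .trans R (Polynomial R) F
  have : HasProjectiveDimensionLE (ModuleCat.of R F) n :=
    hasProjectiveDimensionLE_of_subsingleton_ext_flat n _ fun K hK =>
      (hcd K hK).subsingleton_ext (ModuleCat.of R F)
  have := hasProjectiveDimensionLE_polynomial_succ (R := R) (G := F) n
  exact HasProjectiveDimensionLT.subsingleton _ (n + 2) _ le_rfl _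

/-- if every flat `R`-module has cotorsion dimension at most `n`, then
every flat `R[x]`-module has cotorsion dimension at most `n + 1`. -/
theorem polynomial_flat_cotorsionDim_le_succ (R : Type u) [CommRing R] (n : ℕ)
    (hcd : ∀ (F : Type u) [AddCommGroup F] [Module R F], Module.Flat R F →
      cotorsionDimLE R F n) :
    ∀ (G : Type u) [AddCommGroup G] [Module (Polynomial R) G],
      Module.Flat (Polynomial R) G → cotorsionDimLE (Polynomial R) G (n + 1) := by
  exact fun G _ _ _ => polynomial_flat_cotorsionDim_le_succ_general R n hcd G
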